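/- The value r = 5 − 2√6 lies in (0,1) and satisfies α(r) + 2·β′(r) + π/3 = 2π, and it is the unique r ∈ (0,1) with this property. -/

import Mathlib

/-- The angle `α′(r) = arccos(1/(1+r))`. -/
noncomputable def alpha' (r : ℝ) : ℝ := Real.arccos (1 / (1 + r))

/-- The angle `α(r) = π − 2α′(r)`. -/
noncomputable def alphaAngle (r : ℝ) : ℝ := Real.pi - 2 * alpha' r

/-- The angle `β′(r) = arccos(r/(1+r))`. -/
noncomputable def beta' (r : ℝ) : ℝ := Real.arccos (r / (1 + r))

/-- The angle `β(r) = π − 2β′(r)`. -/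
noncomputable def betaAngle (r : ℝ) : ℝ := Real.pi - 2 * beta' r

/-- `F_{ijk}(r) = i·α(r) + j·β′(r) + k·π/3`. -/
noncomputable def F (i j k : ℕ) (r : ℝ) : ℝ :=
  (i : ℝ) * alphaAngle r + (j : ℝ) * beta' r + (k : ℝ) * (Real.pi / 3)

/-!
Since `α = π - 2α'`, the equation says `β' = α' + π/3`. For `0 ≤ r` both sides lie in `[0, π]`,
so they agree as soon as their cosines do, which gives `√(3 r (r + 2)) = 1 - 2 r`. Squaring turns
this into `r² - 10 r + 1 = 0`, and the sign condition `2 r ≤ 1` discards the root `5 + 2√6`.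
-/

section Angles

variable {r : ℝ}

theorem alpha'_mem_Icc (hr : 0 ≤ r) : alpha' r ∈ Set.Icc 0 (Real.pi / 2) :=
  ⟨Real.arccos_nonneg _, Real.arccos_le_pi_div_two.2 (by positivity)⟩

theorem cos_alpha' (hr : 0 ≤ r) : Real.cos (alpha' r) = 1 / (1 + r) :=
  Real.cos_arccos (neg_one_lt_zero.le.trans (by positivity))
    (div_le_one_of_le₀ (by linarith) (by positivity))

theorem sin_alpha' (hr : 0 ≤ r) : Real.sin (alpha' r) = √(r * (r + 2)) / (1 + r) := by
  have hsq : 1 - (1 / (1 + r)) ^ 2 = r * (r + 2) / (1 + r) ^ 2 := by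
    field_simp
    ring
  rw [alpha', Real.sin_arccos, hsq, Real.sqrt_div (by positivity), Real.sqrt_sq (by positivity)]

theorem cos_beta' (hr : 0 ≤ r) : Real.cos (beta' r) = r / (1 + r) :=
  Real.cos_arccos (neg_one_lt_zero.le.trans (by positivity))
    (div_le_one_of_le₀ (by linarith) (by positivity))

theorem cos_alpha'_add_pi_div_three (hr : 0 ≤ r) :
    Real.cos (alpha' r + Real.pi / 3) = (1 - √(3 * (r * (r + 2)))) / 2 / (1 + r) := by
  rw [Real.cos_add, cos_alpha' hr, sin_alpha' hr, Real.cos_pi_div_three, Real.sin_pi_div_three,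
    Real.sqrt_mul zero_le_three]
  ring

theorem beta'_eq_alpha'_add_pi_div_three_iff (hr : 0 ≤ r) :
    beta' r = alpha' r + Real.pi / 3 ↔ √(3 * (r * (r + 2))) = 1 - 2 * r := by
  have hβ : beta' r ∈ Set.Icc 0 Real.pi := ⟨Real.arccos_nonneg _, Real.arccos_le_pi _⟩
  have hα : alpha' r + Real.pi / 3 ∈ Set.Icc 0 Real.pi := by
    obtain ⟨h₀, h₁⟩ := alpha'_mem_Icc hr
    constructor <;> linarith [Real.pi_pos]
  rw [← Real.injOn_cos.eq_iff hβ hα, cos_beta' hr, cos_alpha'_add_pi_div_three hr,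
    div_left_inj' (by positivity)]
  constructor <;> intro h <;> linarith

end Angles

theorem five_sub_two_mul_sqrt_six_mem_Ioo : 5 - 2 * √6 ∈ Set.Ioo (0 : ℝ) (1 / 2) := by
  have hgt : 9 / 4 < √6 := Real.lt_sqrt_of_sq_lt (by norm_num)
  have hlt : √6 < 5 / 2 := (Real.sqrt_lt' (by norm_num)).2 (by norm_num)
  constructor <;> linarith

theorem sqrt_three_mul_eq_one_sub_two_mul_iff {r : ℝ} (hr : 0 ≤ r) :
    √(3 * (r * (r + 2))) = 1 - 2 * r ↔ r = 5 - 2 * √6 := by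
  have h6 : √6 ^ 2 = 6 := Real.sq_sqrt (by norm_num)
  constructor
  · intro h
    have hle : 2 * r ≤ 1 := sub_nonneg.1 (h ▸ Real.sqrt_nonneg _)
    have hquad : (5 - r) ^ 2 = (2 * √6) ^ 2 := by
      have hsq : √(3 * (r * (r + 2))) ^ 2 = 3 * (r * (r + 2)) := Real.sq_sqrt (by positivity)
      rw [h] at hsq
      linear_combination hsq - 4 * h6
    have hroot : 5 - r = 2 * √6 := (sq_eq_sq₀ (by linarith) (by positivity)).1 hquad
    linarith
  · rintro rfl
    have hnonneg : 0 ≤ 1 - 2 * (5 - 2 * √6) := by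
      linarith [five_sub_two_mul_sqrt_six_mem_Ioo.2]
    rw [Real.sqrt_eq_iff_eq_sq (by positivity) hnonneg]
    linear_combination -4 * h6

theorem c9_equation_general {r : ℝ} (hr : 0 ≤ r) :
    alphaAngle r + 2 * beta' r + Real.pi / 3 = 2 * Real.pi ↔ r = 5 - 2 * √6 := by
  rw [← sqrt_three_mul_eq_one_sub_two_mul_iff hr, ← beta'_eq_alpha'_add_pi_div_three_iff hr,
    alphaAngle]
  constructor <;> intro h <;> linarith

/-- `r = 5 − 2√6` lies in `(0,1)`, satisfies `α(r) + 2β′(r) + π/3 = 2π`, and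
is the unique `r ∈ (0,1)` with this property. -/
theorem c9_equation :
    5 - 2 * Real.sqrt 6 ∈ Set.Ioo (0 : ℝ) 1 ∧
    alphaAngle (5 - 2 * Real.sqrt 6) + 2 * beta' (5 - 2 * Real.sqrt 6) +
      Real.pi / 3 = 2 * Real.pi ∧
    ∀ r ∈ Set.Ioo (0 : ℝ) 1,
      alphaAngle r + 2 * beta' r + Real.pi / 3 = 2 * Real.pi →
      r = 5 - 2 * Real.sqrt 6 := by
  obtain ⟨hpos, hlt⟩ := five_sub_two_mul_sqrt_six_mem_Ioo
  exact ⟨⟨hpos, hlt.trans one_half_lt_one⟩, (c9_equation_general hpos.le).2 rfl,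
    fun r hr => (c9_equation_general hr.1.le).1⟩
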